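/- arXiv:math/0605559 — 2 statements merged into one kernel-verified Lean document; each statement's English description precedes it below -/
import Mathlib

section
/- For 1 ≤ k ≤ n, the connected component Γₖ of {λ ∈ ℝⁿ : σₖ(λ) > 0} containing the positive cone Γₙ = {λ : λᵢ > 0 for all i} equals {λ ∈ ℝⁿ : σ₁(λ) > 0, σ₂(λ) > 0, …, σₖ(λ) > 0}, and Γₖ is an open convex symmetric cone with vertex at the origin satisfying Γₙ ⊆ Γₖ ⊆ Γ₁ = {λ : Σλᵢ > 0}. -/
open scoped BigOperators
noncomputable section

/-- The `k`-th elementary symmetric function of `lam`. -/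
def esymm (n k : ℕ) (lam : Fin n → ℝ) : ℝ :=
  ∑ s ∈ Finset.univ.powersetCard k, ∏ i ∈ s, lam i

open Polynomial in
theorem laguerre_aux (m : Multiset ℝ) (x : ℝ) :
    let P := (m.map (fun a => (X - C a : ℝ[X]))).prod
    P.eval x * (derivative (derivative P)).eval x ≤ ((derivative P).eval x) ^ 2 := by
  induction m using Multiset.induction_on with
  | empty => simp
  | cons a m ih =>
    simp only [Multiset.map_cons, Multiset.prod_cons] at ih ⊢
    set P := (m.map (fun a => (X - C a : ℝ[X]))).prod
    simp only [derivative_mul, derivative_sub, derivative_X, derivative_C, sub_zero, one_mul,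
      derivative_add, eval_add, eval_mul, eval_sub, eval_X, eval_C]
    nlinarith [sq_nonneg (P.eval x), mul_nonneg (sq_nonneg (x - a)) (sub_nonneg.2 ih)]

open Polynomial in
theorem laguerre (P : ℝ[X]) (hP : P.Splits) (x : ℝ) :
    P.eval x * (derivative (derivative P)).eval x ≤ ((derivative P).eval x) ^ 2 := by
  have h := hP.eq_prod_roots
  have h2 := laguerre_aux P.roots x
  simp only at h2
  set Q := (P.roots.map (fun a => (X - C a : ℝ[X]))).prod
  rw [h]
  simp only [derivative_mul, derivative_C, zero_mul, zero_add, eval_mul, eval_C]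
  nlinarith [mul_nonneg (sq_nonneg P.leadingCoeff) (sub_nonneg.2 h2)]

open Polynomial in
theorem splits_deriv (P : ℝ[X]) (hP : P.Splits) : (derivative P).Splits := by
  rw [splits_iff_card_roots] at hP ⊢
  have h1 := card_roots_le_derivative P
  have h2 := card_roots' (derivative P)
  have h3 := natDegree_derivative_le P
  rcases Nat.eq_zero_or_pos P.natDegree with h | h
  · rw [eq_C_of_natDegree_eq_zero h]; simp
  · omega

open Polynomial in
theorem newton_coeff (j : ℕ) : ∀ (P : ℝ[X]), P.Splits →
    ((j : ℝ) + 2) * (P.coeff j * P.coeff (j + 2)) ≤ (j + 1) * (P.coeff (j + 1)) ^ 2 := by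
  induction j with
  | zero =>
    intro P hP
    have h := laguerre P hP 0
    simp only [← coeff_zero_eq_eval_zero, coeff_derivative] at h
    norm_num at h ⊢
    linarith
  | succ j ih =>
    intro P hP
    have h := ih _ (splits_deriv P hP)
    simp only [coeff_derivative] at h
    push_cast at h ⊢
    have hp : (0 : ℝ) < (j + 1) * (j + 2) := by positivity
    refine le_of_mul_le_mul_left ?_ hp
    have e1 : j + 1 + 2 = j + 2 + 1 := by ring
    have e2 : j + 1 + 1 = j + 2 := by ring
    rw [e2] at h
    rw [e1, e2]
    rw [show j + 1 + 1 = j + 2 by ring] at h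
    linarith

/-- elementary symmetric function over a finset -/
def EE {ι : Type} (s : Finset ι) (k : ℕ) (x : ι → ℝ) : ℝ :=
  ∑ t ∈ s.powersetCard k, ∏ i ∈ t, x i

theorem EE_zero {ι : Type} (s : Finset ι) (x : ι → ℝ) : EE s 0 x = 1 := by
  simp [EE]

theorem EE_one {ι : Type} (s : Finset ι) (x : ι → ℝ) : EE s 1 x = ∑ i ∈ s, x i := by
  simp [EE, Finset.powersetCard_one]

theorem EE_empty {ι : Type} (k : ℕ) (x : ι → ℝ) : EE ∅ (k + 1) x = 0 := by
  unfold EE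
  rw [Finset.powersetCard_eq_empty.2 (by simp), Finset.sum_empty]

theorem EE_insert {ι : Type} [DecidableEq ι] (s : Finset ι) (a : ι) (ha : a ∉ s) (k : ℕ)
    (x : ι → ℝ) : EE (insert a s) (k + 1) x = EE s (k + 1) x + x a * EE s k x := by
  unfold EE
  rw [Finset.powersetCard_succ_insert ha, Finset.sum_union, Finset.sum_image, Finset.mul_sum]
  · congr 1
    refine Finset.sum_congr rfl fun t ht => ?_
    rw [Finset.prod_insert]
    exact fun h => ha ((Finset.mem_powersetCard.1 ht).1 h)
  · intro t ht t' ht' h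
    have h1 : a ∉ t := fun h => ha ((Finset.mem_powersetCard.1 ht).1 h)
    have h2 : a ∉ t' := fun h => ha ((Finset.mem_powersetCard.1 ht').1 h)
    have := congrArg (fun u => Finset.erase u a) h
    simpa [h1, h2] using this
  · rw [Finset.disjoint_left]
    intro t ht ht'
    obtain ⟨u, hu, rfl⟩ := Finset.mem_image.1 ht'
    exact ha ((Finset.mem_powersetCard.1 ht).1 (Finset.mem_insert_self a u))

theorem EE_erase {ι : Type} [DecidableEq ι] (s : Finset ι) (a : ι) (ha : a ∈ s) (k : ℕ)
    (x : ι → ℝ) :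
    EE s (k + 1) x = EE (s.erase a) (k + 1) x + x a * EE (s.erase a) k x := by
  conv_lhs => rw [← Finset.insert_erase ha]
  exact EE_insert _ _ (Finset.notMem_erase a s) k x

open Polynomial in
theorem coeff_EE {ι : Type} [DecidableEq ι] (s : Finset ι) (x : ι → ℝ) : ∀ k : ℕ,
    (∏ i ∈ s, (1 + C (x i) * X : ℝ[X])).coeff k = EE s k x := by
  induction s using Finset.induction_on with
  | empty =>
    intro k
    cases k with
    | zero => simp [EE]
    | succ k => simp [EE_empty, coeff_one]
  | insert a s ha ih =>
    intro k
    rw [Finset.prod_insert ha, add_mul, one_mul, coeff_add, mul_assoc, coeff_C_mul]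
    cases k with
    | zero => simp [ih, EE_zero]
    | succ k => rw [coeff_X_mul, ih, ih, EE_insert _ _ ha]

open Polynomial in
theorem newton {ι : Type} [DecidableEq ι] (s : Finset ι) (x : ι → ℝ) (k : ℕ) :
    EE s k x * EE s (k + 2) x ≤ (EE s (k + 1) x) ^ 2 := by
  have hs : (∏ i ∈ s, (1 + C (x i) * X : ℝ[X])).Splits := by
    refine Splits.prod fun i _ => Splits.of_natDegree_le_one ?_
    rw [add_comm, ← C_1]
    exact natDegree_linear_le
  have h := newton_coeff k _ hs
  simp only [coeff_EE] at h
  by_contra! hc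
  have hk : (0 : ℝ) ≤ k := Nat.cast_nonneg k
  nlinarith [sq_nonneg (EE s (k + 1) x)]

theorem sum_EE {ι : Type} [DecidableEq ι] (s : Finset ι) (x : ι → ℝ) : ∀ k : ℕ,
    ∑ i ∈ s, x i * EE (s.erase i) k x = (k + 1) * EE s (k + 1) x := by
  induction s using Finset.induction_on with
  | empty => intro k; simp [EE_empty]
  | insert a s ha ih =>
    intro k
    rw [Finset.sum_insert ha, Finset.erase_insert ha, EE_insert _ _ ha]
    have hne : ∀ i ∈ s, (insert a s).erase i = insert a (s.erase i) := by
      intro i hi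
      rw [Finset.erase_insert_of_ne]
      rintro rfl; exact ha hi
    rw [Finset.sum_congr rfl fun i hi => by rw [hne i hi]]
    cases k with
    | zero => have := ih 0; simp only [EE_zero] at this ⊢; simp at this ⊢; rw [this]; ring
    | succ k =>
      have h1 := ih k
      have h2 := ih (k + 1)
      have : ∑ i ∈ s, x i * EE (insert a (s.erase i)) (k + 1) x
          = ∑ i ∈ s, x i * EE (s.erase i) (k + 1) x
            + x a * ∑ i ∈ s, x i * EE (s.erase i) k x := by
        rw [Finset.mul_sum, ← Finset.sum_add_distrib]
        refine Finset.sum_congr rfl fun i hi => ?_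
        rw [EE_insert _ _ (fun h => ha (Finset.mem_of_mem_erase h))]
        ring
      rw [this, h1, h2]
      push_cast
      ring

/-- the cone -/
def GG {ι : Type} (s : Finset ι) (k : ℕ) (x : ι → ℝ) : Prop := ∀ j ≤ k, 0 < EE s j x

theorem GG_erase {ι : Type} [DecidableEq ι] (s : Finset ι) (x : ι → ℝ) (i : ι) (hi : i ∈ s)
    (k : ℕ) : GG s (k + 1) x → GG (s.erase i) k x := by
  induction k with
  | zero =>
    intro _ j hj
    obtain rfl : j = 0 := by omega
    simp [EE_zero]
  | succ k ih =>
    intro h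
    have h0 := ih fun j hj => h j (by omega)
    intro j hj
    rcases Nat.lt_or_ge j (k + 1) with hj' | hj'
    · exact h0 j (by omega)
    obtain rfl : j = k + 1 := by omega
    have n := newton (s.erase i) x k
    have a1 := h (k + 2) (by omega)
    have a2 := h (k + 1) (by omega)
    have a0 := h0 k le_rfl
    rw [EE_erase s i hi] at a1 a2
    change 0 < EE (s.erase i) (k + 2) x + _ at a1
    generalize EE (s.erase i) (k + 2) x = A at *
    generalize EE (s.erase i) (k + 1) x = B at *
    generalize EE (s.erase i) k x = D at *
    by_contra! hB
    nlinarith [mul_pos a1 a0, mul_nonneg (neg_nonneg.2 hB) a2.le]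

theorem frac_aux (a b α β A : ℝ) (hα : 0 < α) (hβ : 0 < β) (hA : α + β ≤ A) :
    (a + b) ^ 2 / A ≤ a ^ 2 / α + b ^ 2 / β := by
  have h1 : (a + b) ^ 2 / A ≤ (a + b) ^ 2 / (α + β) := by gcongr
  refine h1.trans ?_
  rw [div_add_div _ _ hα.ne' hβ.ne', div_le_div_iff₀ (by positivity) (by positivity)]
  nlinarith [mul_nonneg (mul_pos hα hβ).le (sq_nonneg (a * β - b * α)), sq_nonneg (a * β - b * α)]

theorem q_formula {ι : Type} [DecidableEq ι] (s : Finset ι) (x : ι → ℝ) (k : ℕ)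
    (h : GG s (k + 1) x) :
    ((k : ℝ) + 2) * (EE s (k + 2) x / EE s (k + 1) x) =
      ∑ i ∈ s, (x i - (x i) ^ 2 /
        (x i + EE (s.erase i) (k + 1) x / EE (s.erase i) k x)) := by
  have hs := sum_EE s x (k + 1)
  have hp := h (k + 1) le_rfl
  rw [← mul_div_assoc]
  have : ((k : ℝ) + 2) * EE s (k + 2) x = ((k + 1 : ℕ) + 1) * EE s (k + 1 + 1) x := by
    push_cast; ring
  rw [this, ← hs, Finset.sum_div]
  refine Finset.sum_congr rfl fun i hi => ?_
  have h0 := GG_erase s x i hi k h k le_rfl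
  have he := EE_erase s i hi k x
  have : x i + EE (s.erase i) (k + 1) x / EE (s.erase i) k x
      = EE s (k + 1) x / EE (s.erase i) k x := by
    rw [he]; field_simp; ring
  rw [this]
  have e2 : EE (s.erase i) (k + 1) x = EE s (k + 1) x - x i * EE (s.erase i) k x := by
    rw [he]; ring
  rw [e2]
  field_simp

theorem superadd {ι : Type} [DecidableEq ι] (k : ℕ) : ∀ (s : Finset ι) (x y : ι → ℝ),
    GG s k x → GG s k y → GG s k (x + y) ∧
      EE s (k + 1) x / EE s k x + EE s (k + 1) y / EE s k y ≤
        EE s (k + 1) (x + y) / EE s k (x + y) := by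
  induction k with
  | zero =>
    intro s x y _ _
    refine ⟨fun j hj => ?_, ?_⟩
    · obtain rfl : j = 0 := by omega
      simp [EE_zero]
    · simp [EE_zero, EE_one, Finset.sum_add_distrib]
  | succ k ih =>
    intro s x y hx hy
    obtain ⟨h1, h2⟩ := ih s x y (fun j hj => hx j (by omega)) (fun j hj => hy j (by omega))
    have hxy : GG s (k + 1) (x + y) := by
      intro j hj
      rcases Nat.lt_or_ge j (k + 1) with hj' | hj'
      · exact h1 j (by omega)
      obtain rfl : j = k + 1 := by omega
      have p1 := div_pos (hx (k + 1) le_rfl) (hx k (by omega))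
      have p2 := div_pos (hy (k + 1) le_rfl) (hy k (by omega))
      have p3 := lt_of_lt_of_le (add_pos p1 p2) h2
      exact (div_pos_iff_of_pos_right (h1 k le_rfl)).1 p3
    refine ⟨hxy, ?_⟩
    have hk : (0 : ℝ) < (k : ℝ) + 2 := by positivity
    refine le_of_mul_le_mul_left ?_ hk
    change ((k : ℝ) + 2) * (EE s (k + 2) x / EE s (k + 1) x + EE s (k + 2) y / EE s (k + 1) y)
      ≤ ((k : ℝ) + 2) * (EE s (k + 2) (x + y) / EE s (k + 1) (x + y))
    rw [mul_add, q_formula s x k hx, q_formula s y k hy, q_formula s _ k hxy,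
      ← Finset.sum_add_distrib]
    refine Finset.sum_le_sum fun i hi => ?_
    have gx := GG_erase s x i hi k hx
    have gy := GG_erase s y i hi k hy
    have hq := (ih (s.erase i) x y gx gy).2
    have pos : ∀ z : ι → ℝ, GG s (k + 1) z → GG (s.erase i) k z →
        0 < z i + EE (s.erase i) (k + 1) z / EE (s.erase i) k z := by
      intro z hz gz
      have a := hz (k + 1) le_rfl
      have b := gz k le_rfl
      rw [EE_erase s i hi] at a
      have : z i + EE (s.erase i) (k + 1) z / EE (s.erase i) k z =
        (EE (s.erase i) (k + 1) z + z i * EE (s.erase i) k z) / EE (s.erase i) k z := by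
        field_simp; ring
      rw [this]
      exact div_pos a b
    have := frac_aux (x i) (y i) _ _
      ((x + y) i + EE (s.erase i) (k + 1) (x + y) / EE (s.erase i) k (x + y))
      (pos x hx gx) (pos y hy gy) (by simp only [Pi.add_apply]; linarith)
    simp only [Pi.add_apply] at this ⊢
    linarith

theorem EE_smul {ι : Type} (s : Finset ι) (k : ℕ) (c : ℝ) (x : ι → ℝ) :
    EE s k (c • x) = c ^ k * EE s k x := by
  unfold EE
  rw [Finset.mul_sum]
  refine Finset.sum_congr rfl fun t ht => ?_
  simp [Finset.prod_mul_distrib, (Finset.mem_powersetCard.1 ht).2]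

theorem EE_cont {ι : Type} (s : Finset ι) (k : ℕ) : Continuous (EE s k) := by
  unfold EE
  fun_prop

theorem EE_step {ι : Type} [DecidableEq ι] (s : Finset ι) (x : ι → ℝ) (k : ℕ) (h : GG s k x) :
    EE s (k + 1) x ≤ EE s k x * EE s 1 x := by
  induction k with
  | zero => simp [EE_zero]
  | succ k ih =>
    have h1 := ih fun j hj => h j (by omega)
    have n := newton s x k
    have a := h k (by omega)
    have b := h (k + 1) le_rfl
    refine le_of_mul_le_mul_left ?_ a
    change EE s k x * EE s (k + 2) x ≤ _
    nlinarith

theorem EE_mac {ι : Type} [DecidableEq ι] (s : Finset ι) (x : ι → ℝ) (j d : ℕ)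
    (h : GG s (j + d) x) (h1 : 0 ≤ EE s 1 x) :
    EE s (j + d) x ≤ EE s j x * EE s 1 x ^ d := by
  induction d with
  | zero => simp
  | succ d ih =>
    have i1 := ih fun i hi => h i (by omega)
    have i2 := EE_step s x (j + d) fun i hi => h i (by omega)
    calc EE s (j + (d + 1)) x ≤ EE s (j + d) x * EE s 1 x := i2
      _ ≤ EE s j x * EE s 1 x ^ d * EE s 1 x := by gcongr
      _ = _ := by ring

theorem stmt10 (n k : ℕ) (hk : 1 ≤ k) (hkn : k ≤ n)
    (Γk : Set (Fin n → ℝ))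
    (hΓk : Γk = connectedComponentIn {lam : Fin n → ℝ | 0 < esymm n k lam}
      (fun _ => 1)) :
    Γk = {lam : Fin n → ℝ | ∀ j : ℕ, 1 ≤ j → j ≤ k → 0 < esymm n j lam} ∧
    IsOpen Γk ∧ Convex ℝ Γk ∧
    (∀ lam ∈ Γk, ∀ σ : Equiv.Perm (Fin n), lam ∘ σ ∈ Γk) ∧
    (∀ lam ∈ Γk, ∀ c : ℝ, 0 < c → c • lam ∈ Γk) ∧
    {lam : Fin n → ℝ | ∀ i, 0 < lam i} ⊆ Γk ∧
    Γk ⊆ {lam : Fin n → ℝ | 0 < ∑ i, lam i} := by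
  have hE : ∀ j x, esymm n j x = EE Finset.univ j x := fun _ _ => rfl
  set S : Set (Fin n → ℝ) :=
    {lam : Fin n → ℝ | ∀ j : ℕ, 1 ≤ j → j ≤ k → 0 < esymm n j lam} with hS
  have hSG : ∀ x, x ∈ S ↔ GG Finset.univ k x := by
    intro x
    constructor
    · intro h j hj
      rcases Nat.eq_zero_or_pos j with rfl | h0
      · simp [EE_zero]
      · exact h j h0 hj
    · intro h j _ hj
      exact h j hj
  have hopen : IsOpen S := by
    have : S = ⋂ j ∈ Finset.Icc 1 k, {x | 0 < EE (Finset.univ : Finset (Fin n)) j x} := by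
      ext x
      simp [hS, hE]
    rw [this]
    exact isOpen_biInter_finset fun j _ => isOpen_lt continuous_const (EE_cont _ j)
  have hcone : ∀ x ∈ S, ∀ c : ℝ, 0 < c → c • x ∈ S := by
    intro x hx c hc j h1 h2
    rw [hE, EE_smul]
    exact mul_pos (pow_pos hc j) (hx j h1 h2)
  have hadd : ∀ x ∈ S, ∀ y ∈ S, x + y ∈ S := by
    intro x hx y hy
    rw [hSG] at *
    exact (superadd k _ x y hx hy).1
  have hconv : Convex ℝ S := by
    rw [convex_iff_forall_pos]
    intro x hx y hy a b ha hb _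
    exact hadd _ (hcone x hx a ha) _ (hcone y hy b hb)
  have hpos : {lam : Fin n → ℝ | ∀ i, 0 < lam i} ⊆ S := by
    intro x hx j h1 h2
    refine Finset.sum_pos (fun t _ => Finset.prod_pos fun i _ => hx i) ?_
    rw [Finset.powersetCard_nonempty]
    simpa using h2.trans hkn
  have h1S : (fun _ => 1 : Fin n → ℝ) ∈ S := hpos fun _ => one_pos
  have hSU : S ⊆ {lam : Fin n → ℝ | 0 < esymm n k lam} := fun x hx => hx k hk le_rfl
  have hmain : Γk = S := by
    rw [hΓk]
    apply Set.Subset.antisymm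
    · refine isPreconnected_connectedComponentIn.subset_of_closure_inter_subset hopen
        ⟨_, mem_connectedComponentIn (hSU h1S), h1S⟩ ?_
      rintro x ⟨hx, hxC⟩
      have hxU : x ∈ {lam : Fin n → ℝ | 0 < esymm n k lam} :=
        connectedComponentIn_subset _ _ hxC
      rw [Set.mem_setOf_eq] at hxU
      rw [hE] at hxU
      intro j h1 h2
      rw [hE]
      have c1 : 0 ≤ EE Finset.univ j x := by
        have : closure S ⊆ {z | 0 ≤ EE Finset.univ j z} :=
          closure_minimal (fun z hz => (hz j h1 h2).le)
            (isClosed_le continuous_const (EE_cont _ j))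
        exact this hx
      have c2 : EE Finset.univ k x ≤ EE Finset.univ j x * EE Finset.univ 1 x ^ (k - j) := by
        have : closure S ⊆ {z | EE Finset.univ k z ≤
            EE Finset.univ j z * EE Finset.univ 1 z ^ (k - j)} := by
          refine closure_minimal (fun z hz => ?_)
            (isClosed_le (EE_cont _ k) ((EE_cont _ j).mul ((EE_cont _ 1).pow _)))
          have e : j + (k - j) = k := by omega
          have := EE_mac Finset.univ z j (k - j) (by rw [e]; exact (hSG z).1 hz)
            (hz 1 le_rfl hk).le
          rwa [e] at this
        exact this hx
      rcases c1.lt_or_eq with h | h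
      · exact h
      · rw [← h, zero_mul] at c2
        linarith
    · exact hconv.isPreconnected.subset_connectedComponentIn h1S hSU
  rw [hmain]
  refine ⟨rfl, hopen, hconv, ?_, hcone, hpos, ?_⟩
  · intro x hx σ j h1 h2
    have : esymm n j (x ∘ σ) = esymm n j x := by
      unfold esymm
      refine Finset.sum_equiv (Equiv.finsetCongr σ) ?_ ?_
      · intro t
        simp [Finset.mem_powersetCard]
      · intro t _
        simp
    rw [this]
    exact hx j h1 h2
  · intro x hx
    have := hx 1 le_rfl hk
    rw [hE, EE_one] at this
    exact this
end
end

section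
/- Let n ≥ 3. If u is a positive C² function on ℝⁿ with Δu = 0, then for every x ∈ ℝⁿ, λ > 0, and y with |y-x| ≥ λ, one has u_{x,λ}(y) := (λ/|y-x|)^{n-2}·u(x + λ²(y-x)/|y-x|²) ≤ u(y); consequently u is constant. -/
open scoped BigOperators
noncomputable section

abbrev Euc (n : ℕ) := EuclideanSpace ℝ (Fin n)

/-- First partial derivative of `f` at `x` in direction `i`. -/
def pd {n : ℕ} (f : Euc n → ℝ) (x : Euc n) (i : Fin n) : ℝ :=
  fderiv ℝ f x (EuclideanSpace.single i 1)

/-- Second partial derivative (Hessian entry) of `f` at `x`. -/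
def hess {n : ℕ} (f : Euc n → ℝ) (x : Euc n) (i j : Fin n) : ℝ :=
  fderiv ℝ (fun y => fderiv ℝ f y (EuclideanSpace.single i 1)) x (EuclideanSpace.single j 1)

theorem second_deriv_test (f f' : ℝ → ℝ) (c : ℝ) (hf : ∀ᶠ t in nhds (0:ℝ), HasDerivAt f (f' t) t)
    (hf' : HasDerivAt f' c 0) (hmin : IsLocalMin f 0) : 0 ≤ c := by
  by_contra hc
  push Not at hc
  have hd : deriv f =ᶠ[nhds 0] f' := hf.mono fun t ht => ht.deriv
  have hdd : deriv (deriv f) 0 = c := by rw [hd.deriv_eq]; exact hf'.deriv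
  have hmax : IsLocalMax f 0 := isLocalMax_of_deriv_deriv_neg (by rw [hdd]; exact hc)
    hmin.deriv_eq_zero hf.self_of_nhds.continuousAt
  have hconst : f =ᶠ[nhds 0] fun _ => f 0 := by
    filter_upwards [hmin, hmax] with t h1 h2
    exact le_antisymm h2 h1
  have h1 : deriv f =ᶠ[nhds 0] fun _ => 0 := by
    have := hconst.deriv
    simpa using this
  have h2 : deriv (deriv f) 0 = 0 := by
    rw [h1.deriv_eq]; simp
  linarith

section Kelvin

variable {E : Type*} [NormedAddCommGroup E] [InnerProductSpace ℝ E]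

/-- The Kelvin transform along a line `t ↦ y + t e`, with `S = s + 2 b t + t²`. -/
theorem kelvin_line (u : E → ℝ) (hu : ContDiff ℝ 2 u) (x y e : E) (s b a r : ℝ) (hs : 0 < s) :
    ∃ φ' : ℝ → ℝ,
      (∀ᶠ t in nhds (0:ℝ), HasDerivAt (fun t : ℝ => (s + 2*b*t + t^2) ^ a *
        u (x + (r / (s + 2*b*t + t^2)) • (y + t • e))) (φ' t) t) ∧
      HasDerivAt φ'
        ((a*(a-1)*s^(a-2)*(4*b^2) + a * s^(a-1) * 2) * u (x + (r/s) • y)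
          + 2 * (a * s^(a-1) * (2*b)) * fderiv ℝ u (x + (r/s) • y)
              ((r/s) • e - (2*b*r/s^2) • y)
          + s^a * (fderiv ℝ (fderiv ℝ u) (x + (r/s) • y) ((r/s) • e - (2*b*r/s^2) • y)
                ((r/s) • e - (2*b*r/s^2) • y)
              + fderiv ℝ u (x + (r/s) • y)
                ((-(4*b*r/s^2)) • e + (-(2*r/s^2) + 8*b^2*r/s^3) • y))) 0 := by
  have hu1 : Differentiable ℝ u := hu.differentiable (by norm_num)
  have hu2 : Differentiable ℝ (fderiv ℝ u) :=
    (hu.fderiv_right (m := 1) (by norm_num)).differentiable (by norm_num)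
  have hS : ∀ t : ℝ, HasDerivAt (fun t : ℝ => s + 2*b*t + t^2) (2*b + 2*t) t := by
    intro t
    have h := (((hasDerivAt_id t).const_mul (2*b)).const_add s).add ((hasDerivAt_id t).pow 2)
    refine (h.congr_deriv ?_)
    simp
  have hS' : ∀ t : ℝ, HasDerivAt (fun t : ℝ => 2*b + 2*t) 2 t := by
    intro t
    have h := ((hasDerivAt_id t).const_mul 2).const_add (2*b)
    refine (h.congr_deriv ?_)
    simp
  have hL : ∀ t : ℝ, HasDerivAt (fun t : ℝ => y + t • e) e t := by
    intro t
    have h := ((hasDerivAt_id t).smul_const e).const_add y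
    refine (h.congr_deriv ?_)
    simp
  have hP : ∀ t : ℝ, s + 2*b*t + t^2 ≠ 0 →
      HasDerivAt (fun t : ℝ => x + (r / (s + 2*b*t + t^2)) • (y + t • e))
        ((r / (s + 2*b*t + t^2)) • e
          + (-(r * (2*b+2*t)) / (s + 2*b*t + t^2)^2) • (y + t • e)) t := by
    intro t ht
    have h := ((((hasDerivAt_const t r).div (hS t) ht).smul (hL t)).const_add x)
    refine h.congr_deriv ?_
    simp
  have hP2 : HasDerivAt (fun t : ℝ => (r / (s + 2*b*t + t^2)) • e
          + (-(r * (2*b+2*t)) / (s + 2*b*t + t^2)^2) • (y + t • e))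
        ((-(4*b*r/s^2)) • e + (-(2*r/s^2) + 8*b^2*r/s^3) • y) 0 := by
    have h0 : s + 2*b*(0:ℝ) + 0^2 ≠ 0 := by simpa using hs.ne'
    have h := (((hasDerivAt_const (0:ℝ) r).div (hS 0) h0).smul_const e).add
      (((((hS' 0).const_mul r).neg).div ((hS 0).pow 2) (pow_ne_zero 2 h0)).smul (hL 0))
    refine h.congr_deriv ?_
    simp only [Pi.pow_apply, Pi.div_apply, Pi.neg_apply, mul_zero, add_zero, zero_smul]
    have e1 : (-(4*b*r/s^2)) = (0 * (s + 0^2) - r * (2*b)) / (s+0^2)^2 + -(r*(2*b))/(s+0^2)^2 := by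
      field_simp; ring
    have e2 : (-(2*r/s^2) + 8*b^2*r/s^3) = (-(r*2) * (s+0^2)^2 - -(r*(2*b)) * (↑(2:ℕ) * (s+0^2)^(2-1)*(2*b)))/((s+0^2)^2)^2 := by
      norm_num
      field_simp; ring
    rw [e1, e2, add_smul]
    abel
  refine ⟨fun t => ((2*b+2*t) * a * (s + 2*b*t + t^2)^(a-1)) *
        u (x + (r / (s + 2*b*t + t^2)) • (y + t • e))
      + (s + 2*b*t + t^2)^a * fderiv ℝ u (x + (r / (s + 2*b*t + t^2)) • (y + t • e))
        ((r / (s + 2*b*t + t^2)) • e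
          + (-(r * (2*b+2*t)) / (s + 2*b*t + t^2)^2) • (y + t • e)), ?_, ?_⟩
  · have hc : ContinuousAt (fun t : ℝ => s + 2*b*t + t^2) 0 := (hS 0).continuousAt
    have : ∀ᶠ t in nhds (0:ℝ), s + 2*b*t + t^2 ≠ 0 :=
      hc.eventually_ne (by simpa using hs.ne')
    filter_upwards [this] with t ht
    exact ((hS t).rpow_const (Or.inl ht)).mul
      ((hu1 _).hasFDerivAt.comp_hasDerivAt t (hP t ht))
  · have h0 : s + 2*b*(0:ℝ) + 0^2 ≠ 0 := by simpa using hs.ne'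
    have hA := ((((hS' 0).mul_const a).mul ((hS 0).rpow_const (p := a-1) (Or.inl h0))).mul
      ((hu1 _).hasFDerivAt.comp_hasDerivAt 0 (hP 0 h0)))
    have hB := ((hS 0).rpow_const (p := a) (Or.inl h0)).mul
      (((hu2 _).hasFDerivAt.comp_hasDerivAt 0 (hP 0 h0)).clm_apply hP2)
    refine (hA.add hB).congr_deriv ?_
    have hv : (r/s) • e - (2*b*r/s^2) • y = (r/s) • e + (-(r*(2*b))/s^2) • y := by
      rw [sub_eq_add_neg, ← neg_smul]; congr 2; ring
    have ha : a - 1 - 1 = a - 2 := by ring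
    simp only [Function.comp, Pi.mul_apply, mul_zero, add_zero, zero_smul, ne_eq, OfNat.ofNat_ne_zero, not_false_eq_true,
      zero_pow, hv, ha]
    ring

end Kelvin

theorem kelvin_sum {n : ℕ} (y : Euc n) (L : Euc n →L[ℝ] ℝ) (B : Euc n →L[ℝ] Euc n →L[ℝ] ℝ)
    (hB : ∑ i, B (EuclideanSpace.single i 1) (EuclideanSpace.single i 1) = 0) (U s a r : ℝ)
    (hs : 0 < s) (hsy : ∑ i, y i ^ 2 = s) (ha : a = (2 - (n:ℝ))/2) :
    ∑ i, ((a*(a-1)*s^(a-2)*(4*(y i)^2) + a * s^(a-1) * 2) * U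
          + 2 * (a * s^(a-1) * (2*y i)) * L
              ((r/s) • EuclideanSpace.single i 1 - (2*y i*r/s^2) • y)
          + s^a * (B ((r/s) • EuclideanSpace.single i 1 - (2*y i*r/s^2) • y)
                ((r/s) • EuclideanSpace.single i 1 - (2*y i*r/s^2) • y)
              + L
                ((-(4*y i*r/s^2)) • EuclideanSpace.single i 1 + (-(2*r/s^2) + 8*(y i)^2*r/s^3) • y))) = 0 := by
  have hy : ∑ i, y i • (EuclideanSpace.single i 1 : Euc n) = y := by
    have := (EuclideanSpace.basisFun (Fin n) ℝ).sum_repr y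
    simpa using this
  have hL : ∑ i, y i * L (EuclideanSpace.single i 1) = L y := by
    conv_rhs => rw [← hy]
    simp [map_sum]
  have hB1 : ∑ i, y i * B (EuclideanSpace.single i 1) y = B y y := by
    have : B y = ∑ i, y i • B (EuclideanSpace.single i 1) := by
      conv_lhs => rw [← hy]
      simp [map_sum]
    rw [this]
    simp [ContinuousLinearMap.sum_apply]
  have hB2 : ∑ i, y i * B y (EuclideanSpace.single i 1) = B y y := by
    have : ∀ z, B z y = ∑ i, y i * B z (EuclideanSpace.single i 1) := by
      intro z
      conv_lhs => rw [← hy]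
      simp [map_sum]
    rw [← this]
  have p1 : s^(a-1) = s^(a-2) * s := by
    rw [← Real.rpow_add_one hs.ne']; congr 1; ring
  have p2 : s^a = s^(a-2) * s^2 := by
    rw [← Real.rpow_natCast s 2, ← Real.rpow_add hs]; congr 1; push_cast; ring
  rw [p1, p2]
  generalize s^(a-2) = p
  have key : ∀ i : Fin n, ((a*(a-1)*p*(4*(y i)^2) + a * (p*s) * 2) * U
          + 2 * (a * (p*s) * (2*y i)) * L
              ((r/s) • EuclideanSpace.single i 1 - (2*y i*r/s^2) • y)
          + p*s^2 * (B ((r/s) • EuclideanSpace.single i 1 - (2*y i*r/s^2) • y)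
                ((r/s) • EuclideanSpace.single i 1 - (2*y i*r/s^2) • y)
              + L
                ((-(4*y i*r/s^2)) • EuclideanSpace.single i 1 + (-(2*r/s^2) + 8*(y i)^2*r/s^3) • y)))
      = (4*a*(a-1)*p*U - 8*a*p*r/s * L y + 4*p*r^2/s^2 * B y y + 8*p*r/s * L y) * (y i)^2
        + (2*a*p*s*U - 2*p*r*L y)
        + (4*a*p*r - 4*p*r) * (y i * L (EuclideanSpace.single i 1))
        + p*r^2 * B (EuclideanSpace.single i 1) (EuclideanSpace.single i 1)
        - (2*p*r^2/s) * (y i * B (EuclideanSpace.single i 1) y)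
        - (2*p*r^2/s) * (y i * B y (EuclideanSpace.single i 1)) := by
    intro i
    simp only [map_sub, map_add, map_smul, smul_eq_mul, ContinuousLinearMap.sub_apply,
      ContinuousLinearMap.smul_apply]
    field_simp
    ring
  rw [Finset.sum_congr rfl fun i _ => key i]
  simp only [Finset.sum_add_distrib, Finset.sum_sub_distrib, ← Finset.mul_sum]
  rw [hL, hB1, hB2, hB, hsy]
  simp only [Finset.sum_const, Finset.card_univ, Fintype.card_fin, nsmul_eq_mul]
  have hn : (n:ℝ) = 2 - 2*a := by rw [ha]; ring
  rw [hn]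
  field_simp
  ring

theorem hess_eq {n : ℕ} (u : Euc n → ℝ) (hu : ContDiff ℝ 2 u) (x : Euc n) (i : Fin n) :
    hess u x i i = fderiv ℝ (fderiv ℝ u) x (EuclideanSpace.single i 1)
      (EuclideanSpace.single i 1) := by
  have hu2 : Differentiable ℝ (fderiv ℝ u) :=
    (hu.fderiv_right (m := 1) (by norm_num)).differentiable (by norm_num)
  unfold hess
  rw [fderiv_clm_apply (hu2 x) (by fun_prop)]
  simp

/-- No interior local minimum for `u - Kelvin - δ|z|²`. -/
theorem no_min {n : ℕ} (hn : 3 ≤ n) (u : Euc n → ℝ) (hu : ContDiff ℝ 2 u)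
    (hharm : ∀ x, ∑ i, hess u x i i = 0) (x y : Euc n) (hy : y ≠ 0) (C r δ : ℝ) (hδ : 0 < δ)
    (hmin : IsLocalMin (fun z : Euc n => u (x + z)
      - C * ((‖z‖^2) ^ ((2 - (n:ℝ))/2) * u (x + (r / ‖z‖^2) • z)) - δ * ‖z‖^2) y) : False := by
  have hs : 0 < ‖y‖^2 := by positivity
  set s := ‖y‖^2 with hsdef
  set a := (2 - (n:ℝ))/2 with ha
  have hsy : ∑ i, y i ^ 2 = s := by
    rw [hsdef, EuclideanSpace.norm_sq_eq]; simp
  have hnorm : ∀ (i : Fin n) (t : ℝ), ‖y + t • (EuclideanSpace.single i 1 : Euc n)‖^2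
      = s + 2 * y i * t + t^2 := by
    intro i t
    rw [norm_add_sq_real, norm_smul, inner_smul_right]
    simp [EuclideanSpace.inner_single_right]
    ring
  have hu1 : Differentiable ℝ u := hu.differentiable (by norm_num)
  have hu2 : Differentiable ℝ (fderiv ℝ u) :=
    (hu.fderiv_right (m := 1) (by norm_num)).differentiable (by norm_num)
  have hi : ∀ i : Fin n, 0 ≤ fderiv ℝ (fderiv ℝ u) (x + y) (EuclideanSpace.single i 1)
      (EuclideanSpace.single i 1)
      - C * ((a*(a-1)*s^(a-2)*(4*(y i)^2) + a * s^(a-1) * 2) * u (x + (r/s) • y)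
          + 2 * (a * s^(a-1) * (2*y i)) * fderiv ℝ u (x + (r/s) • y)
              ((r/s) • EuclideanSpace.single i 1 - (2*y i*r/s^2) • y)
          + s^a * (fderiv ℝ (fderiv ℝ u) (x + (r/s) • y) ((r/s) • EuclideanSpace.single i 1 - (2*y i*r/s^2) • y)
                ((r/s) • EuclideanSpace.single i 1 - (2*y i*r/s^2) • y)
              + fderiv ℝ u (x + (r/s) • y)
                ((-(4*y i*r/s^2)) • EuclideanSpace.single i 1 + (-(2*r/s^2) + 8*(y i)^2*r/s^3) • y)))
      - δ * 2 := by
    intro i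
    obtain ⟨φ', h1, h2⟩ := kelvin_line u hu x y (EuclideanSpace.single i 1) s (y i) a r hs
    set e : Euc n := EuclideanSpace.single i 1 with he
    have hline : ∀ t : ℝ, HasDerivAt (fun t : ℝ => x + (y + t • e)) e t := by
      intro t
      have h := (((hasDerivAt_id t).smul_const e).const_add y).const_add x
      refine (h.congr_deriv ?_)
      simp
    have hS : ∀ t : ℝ, HasDerivAt (fun t : ℝ => s + 2*y i*t + t^2) (2*y i + 2*t) t := by
      intro t
      have h := (((hasDerivAt_id t).const_mul (2*y i)).const_add s).add ((hasDerivAt_id t).pow 2)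
      refine (h.congr_deriv ?_)
      simp
    have hS' : HasDerivAt (fun t : ℝ => 2*y i + 2*t) 2 0 := by
      have h := ((hasDerivAt_id (0:ℝ)).const_mul 2).const_add (2*y i)
      refine (h.congr_deriv ?_)
      simp
    refine second_deriv_test (fun t => u (x + (y + t • e)) - C * ((s + 2*y i*t + t^2) ^ a *
        u (x + (r / (s + 2*y i*t + t^2)) • (y + t • e))) - δ * (s + 2*y i*t + t^2))
      (fun t => fderiv ℝ u (x + (y + t • e)) e - C * φ' t - δ * (2*y i + 2*t)) _ ?_ ?_ ?_
    · filter_upwards [h1] with t ht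
      exact ((((hu1 _).hasFDerivAt.comp_hasDerivAt t (hline t))).sub (ht.const_mul C)).sub
        ((hS t).const_mul δ)
    · have h3 := ((hu2 _).hasFDerivAt.comp_hasDerivAt 0 (hline 0)).clm_apply
        (hasDerivAt_const (0:ℝ) e)
      refine ((h3.sub (h2.const_mul C)).sub (hS'.const_mul δ)).congr_deriv ?_
      simp
    · have hcont : Filter.Tendsto (fun t : ℝ => y + t • e) (nhds 0) (nhds y) := by
        have : Continuous (fun t : ℝ => y + t • e) := by fun_prop
        simpa using this.tendsto 0
      have := hcont.eventually hmin
      filter_upwards [this] with t ht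
      have hn0 := hnorm i t
      rw [← he] at hn0
      simp only [hn0] at ht
      simpa using ht
  have hsum := Finset.sum_nonneg fun i (_ : i ∈ Finset.univ) => hi i
  rw [Finset.sum_sub_distrib, Finset.sum_sub_distrib, ← Finset.mul_sum,
    kelvin_sum y _ _ _ (u (x + (r/s) • y)) s a r hs hsy ha] at hsum
  · have h0 := hharm (x + y)
    simp only [hess_eq u hu] at h0
    rw [h0] at hsum
    simp at hsum
    have : (0:ℝ) < n := by exact_mod_cast (by omega : 0 < n)
    have := mul_pos this (mul_pos hδ two_pos)
    linarith
  · have h0 := hharm (x + (r/s) • y)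
    simpa only [hess_eq u hu] using h0

theorem kelvin_le (n : ℕ) (hn : 3 ≤ n) (u : Euc n → ℝ) (hu : ContDiff ℝ 2 u)
    (hupos : ∀ x, 0 < u x) (hharm : ∀ x, ∑ i, hess u x i i = 0) (x : Euc n) (lam : ℝ) (y : Euc n)
    (hl : 0 < lam) (hly : lam ≤ ‖y‖) :
    (lam / ‖y‖) ^ ((n:ℝ) - 2) * u (x + (lam^2 / ‖y‖^2) • y) ≤ u (x + y) := by
  have hn3 : (3:ℝ) ≤ n := by exact_mod_cast hn
  have huc : Continuous u := hu.continuous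
  set K : Euc n → ℝ := fun z => (lam / ‖z‖) ^ ((n:ℝ) - 2) * u (x + (lam^2 / ‖z‖^2) • z) with hK
  have hKeq : ∀ z : Euc n, K z = lam ^ ((n:ℝ)-2) *
      ((‖z‖^2) ^ ((2 - (n:ℝ))/2) * u (x + (lam^2 / ‖z‖^2) • z)) := by
    intro z
    have : (‖z‖^2) ^ ((2 - (n:ℝ))/2) = (‖z‖ ^ ((n:ℝ)-2))⁻¹ := by
      rw [← Real.rpow_natCast, ← Real.rpow_mul (norm_nonneg z), ← Real.rpow_neg (norm_nonneg z)]
      congr 1; push_cast; ring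
    simp only [hK]
    rw [this, Real.div_rpow hl.le (norm_nonneg z)]
    ring
  by_contra hcon
  push Not at hcon
  change u (x + y) < K y at hcon
  obtain ⟨η, hη⟩ : ∃ η, η = (K y - u (x+y)) / 3 := ⟨_, rfl⟩
  have hηpos : 0 < η := by rw [hη]; linarith
  obtain ⟨M, hM⟩ := (isCompact_closedBall x lam).exists_bound_of_continuousOn huc.continuousOn
  have hM0 : 0 < M := by
    have := hM x (by simp [hl.le])
    exact lt_of_lt_of_le (by simpa using (hupos x).ne') this
  obtain ⟨R, hR⟩ : ∃ R, R = ‖y‖ + 1 + lam * M / η := ⟨_, rfl⟩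
  have hq : 0 < lam * M / η := by positivity
  have hyR : ‖y‖ < R := by rw [hR]; linarith
  have hlR : lam < R := by linarith
  have hR0 : 0 < R := by linarith
  have hKR : ∀ z : Euc n, ‖z‖ = R → K z ≤ η := by
    intro z hz
    have h1 : (lam / R) ^ ((n:ℝ)-2) ≤ lam / R := by
      have h := Real.rpow_le_rpow_of_exponent_ge (x := lam/R) (y := (n:ℝ)-2) (z := 1) (by positivity)
        (by rw [div_le_one hR0]; exact hlR.le) (by linarith)
      simpa using h
    have h2 : u (x + (lam^2 / ‖z‖^2) • z) ≤ M := by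
      refine le_trans (le_abs_self _) (hM _ ?_)
      rw [mem_closedBall_iff_norm, add_sub_cancel_left, norm_smul, hz, Real.norm_eq_abs,
        abs_of_nonneg (by positivity)]
      rw [div_mul_eq_mul_div, div_le_iff₀ (by positivity)]
      nlinarith [mul_pos hl hR0]
    have h3 : lam / R * M ≤ η := by
      have : lam * M / η ≤ R := by rw [hR]; linarith
      rw [div_le_iff₀ hηpos] at this
      rw [div_mul_eq_mul_div, div_le_iff₀ hR0]
      linarith
    simp only [hK]
    rw [hz] at h2 ⊢
    calc _ ≤ lam / R * M := mul_le_mul h1 h2 (hupos _).le (by positivity)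
      _ ≤ η := h3
  obtain ⟨δ, hδ⟩ : ∃ δ, δ = η / R^2 := ⟨_, rfl⟩
  have hδpos : 0 < δ := by rw [hδ]; positivity
  have hδR : δ * R^2 = η := by rw [hδ]; field_simp
  set w : Euc n → ℝ := fun z => u (x + z) - K z - δ * ‖z‖^2 with hw
  set A : Set (Euc n) := {z | lam ≤ ‖z‖ ∧ ‖z‖ ≤ R} with hA
  have hAc : IsCompact A := by
    have h1 : A = Metric.closedBall 0 R ∩ {z | lam ≤ ‖z‖} := by
      ext z; simp [hA, and_comm]
    rw [h1]
    exact (isCompact_closedBall 0 R).inter_right (isClosed_le continuous_const continuous_norm)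
  have hz0 : ∀ z ∈ A, ‖z‖ ≠ 0 := fun z hz => (lt_of_lt_of_le hl hz.1).ne'
  have hwc : ContinuousOn w A := by
    have hKc : ContinuousOn K A := by
      refine ContinuousOn.mul ?_ ?_
      · refine ContinuousOn.rpow_const ?_ ?_
        · exact continuousOn_const.div continuous_norm.continuousOn hz0
        · intro z hz; right; linarith
      · refine huc.comp_continuousOn ?_
        refine continuousOn_const.add (ContinuousOn.fun_smul ?_ continuousOn_id)
        exact continuousOn_const.div (continuous_norm.pow 2).continuousOn
          fun z hz => pow_ne_zero 2 (hz0 z hz)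
    have h1 : Continuous fun z : Euc n => u (x + z) := by fun_prop
    have h2 : Continuous fun z : Euc n => δ * ‖z‖^2 := by fun_prop
    exact (h1.continuousOn.sub hKc).sub h2.continuousOn
  obtain ⟨z, hzA, hzmin⟩ := hAc.exists_isMinOn ⟨y, hly, hyR.le⟩ hwc
  have hwy : w y ≤ -3 * η := by
    have : 0 ≤ δ * ‖y‖^2 := by positivity
    simp only [hw]
    linarith
  have hwz : w z ≤ -3 * η := le_trans (hzmin ⟨hly, hyR.le⟩) hwy
  have hzl : lam < ‖z‖ := by
    refine lt_of_le_of_ne hzA.1 fun h => ?_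
    have hKz : K z = u (x + z) := by
      simp only [hK]
      rw [← h, div_self hl.ne', div_self (by positivity)]
      simp
    have h4 : δ * lam^2 ≤ δ * R^2 := by gcongr
    simp only [hw] at hwz
    rw [hKz, ← h] at hwz
    linarith
  have hzR : ‖z‖ < R := by
    refine lt_of_le_of_ne hzA.2 fun h => ?_
    have h5 := hKR z h
    have h6 := hupos (x + z)
    simp only [hw] at hwz
    rw [h, hδR] at hwz
    linarith
  have hnhds : A ∈ nhds z := by
    have ho : IsOpen {z : Euc n | lam < ‖z‖ ∧ ‖z‖ < R} :=
      (isOpen_lt continuous_const continuous_norm).inter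
        (isOpen_lt continuous_norm continuous_const)
    exact Filter.mem_of_superset (ho.mem_nhds ⟨hzl, hzR⟩) fun q hq => ⟨hq.1.le, hq.2.le⟩
  have hloc : IsLocalMin w z := hzmin.isLocalMin hnhds
  refine no_min hn u hu hharm x z (norm_ne_zero_iff.1 (hz0 z hzA)) (lam ^ ((n:ℝ)-2)) (lam^2) δ
    hδpos ?_
  simp only [hw, hKeq] at hloc
  exact hloc

theorem stmt14 (n : ℕ) (hn : 3 ≤ n) (u : Euc n → ℝ) (hu : ContDiff ℝ 2 u)
    (hupos : ∀ x, 0 < u x) (hharm : ∀ x, ∑ i, hess u x i i = 0) :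
    (∀ (x : Euc n) (lam : ℝ) (y : Euc n), 0 < lam → lam ≤ ‖y - x‖ →
      (lam / ‖y - x‖) ^ ((n:ℝ) - 2) * u (x + (lam^2 / ‖y - x‖^2) • (y - x)) ≤ u y) ∧
    (∀ y z : Euc n, u y = u z) := by
  have main : ∀ (x : Euc n) (lam : ℝ) (y : Euc n), 0 < lam → lam ≤ ‖y - x‖ →
      (lam / ‖y - x‖) ^ ((n:ℝ) - 2) * u (x + (lam^2 / ‖y - x‖^2) • (y - x)) ≤ u y := by
    intro x lam y hl hly
    have := kelvin_le n hn u hu hupos hharm x lam (y - x) hl hly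
    simpa using this
  refine ⟨main, ?_⟩
  have hle : ∀ y z : Euc n, u z ≤ u y := by
    intro y z
    rcases eq_or_ne y z with rfl | hne
    · exact le_rfl
    have hd : 0 < ‖y - z‖ := norm_pos_iff.2 (sub_ne_zero.2 hne)
    -- centre `x = z - k (y - z)`, so `y - x = (k + 1)(y - z)`, `lam² = k (k+1) |y-z|²`
    have hk : ∀ k : ℝ, 0 < k → (Real.sqrt (k / (k+1))) ^ ((n:ℝ)-2) * u z ≤ u y := by
      intro k hk
      have hyx : y - (z - k • (y - z)) = (k+1) • (y - z) := by module
      have hnorm : ‖y - (z - k • (y - z))‖ = (k+1) * ‖y - z‖ := by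
        rw [hyx, norm_smul, Real.norm_eq_abs, abs_of_pos (by linarith)]
      have hk1 : 0 < k + 1 := by linarith
      have hsq : Real.sqrt (k/(k+1)) ^ 2 = k/(k+1) := Real.sq_sqrt (by positivity)
      have h := main (z - k • (y - z)) (Real.sqrt (k/(k+1)) * ((k+1) * ‖y-z‖)) y
        (by positivity) (by
          rw [hnorm]
          refine mul_le_of_le_one_left (by positivity) ?_
          rw [Real.sqrt_le_one, div_le_one hk1]
          linarith)
      rw [hnorm, mul_pow, hsq, mul_div_cancel_right₀ _ (by positivity),
        mul_div_cancel_right₀ _ (by positivity), hyx, smul_smul, div_mul_cancel₀ _ hk1.ne'] at h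
      simpa using h
    have hlim : Filter.Tendsto (fun k : ℝ => (Real.sqrt (k / (k+1))) ^ ((n:ℝ)-2) * u z)
        Filter.atTop (nhds (u z)) := by
      have h1 : Filter.Tendsto (fun k : ℝ => k / (k+1)) Filter.atTop (nhds 1) := by
        have h2 : Filter.Tendsto (fun k : ℝ => 1 - (k+1)⁻¹) Filter.atTop (nhds (1 - 0)) :=
          tendsto_const_nhds.sub (tendsto_inv_atTop_zero.comp
            (Filter.tendsto_atTop_add_const_right _ _ Filter.tendsto_id))
        rw [sub_zero] at h2
        refine h2.congr' ?_
        filter_upwards [Filter.eventually_gt_atTop 0] with k hk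
        field_simp
        ring
      have h3 := ((Real.continuous_sqrt.tendsto 1).comp h1)
      rw [Real.sqrt_one] at h3
      have h4 := (h3.rpow_const (p := (n:ℝ)-2) (Or.inl one_ne_zero)).mul_const (u z)
      simpa using h4
    refine le_of_tendsto hlim ?_
    filter_upwards [Filter.eventually_gt_atTop 0] with k hk0
    exact hk k hk0
  exact fun y z => le_antisymm (hle z y) (hle y z)
end
end
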